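/- Let r ≥ 1 and let i, j, k, l, m be integers with 1 ≤ i < j ≤ r, 0 ≤ l ≤ r-1, m ≥ 0, 1 ≤ k ≤ mr+l, and k ≥ j - i. Then in ℚ(x_1,…,x_r) one has X(i,k) · X(j, mr+l) = X(i, j-i-1) · X(k+i+1, mr+l+j-k-i-1) + X(i, mr+l+j-i) · X(j, k+i-j). -/

import Mathlib

/-- The ambient field `ℚ(x_1, …, x_r)`, realized as the fraction field of the
polynomial ring over `ℚ` in variables indexed by `ZMod r` (so indices are
automatically read modulo `r`). -/
noncomputable abbrev CyclicField (r : ℕ) : Type :=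
  FractionRing (MvPolynomial (ZMod r) ℚ)

/-- The variable `x_i` for `i : ℤ`, with `x_{i+r} = x_i`. -/
noncomputable def xv (r : ℕ) (i : ℤ) : CyclicField r :=
  algebraMap (MvPolynomial (ZMod r) ℚ) (CyclicField r) (MvPolynomial.X (i : ZMod r))

/-- The generalized cluster variable `X(l, n)` (the image of the indecomposable
nilpotent representation `E_l[n]` under the Caldero–Chapoton map):
`X(l,0) = 1` and, for `n ≥ 1`,
`X(l,n) = x_{l+n}/x_l + Σ_{k=1}^{n-1} (x_{l+n}·x_{l+r-1})/(x_{l+k-1}·x_{l+k}) + x_{l+r-1}/x_{l+n-1}`. -/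
noncomputable def Xgcv (r : ℕ) (l : ℤ) : ℕ → CyclicField r
  | 0 => 1
  | n + 1 =>
      xv r (l + n + 1) / xv r l
        + ∑ k ∈ Finset.Icc 1 n,
            (xv r (l + n + 1) * xv r (l + r - 1)) / (xv r (l + k - 1) * xv r (l + k))
        + xv r (l + r - 1) / xv r (l + n)

/-!
Read `x p` as the λ-length of the arc from the ideal vertex `p` to one further ideal point `∞`,
and give every boundary arc `(p, p + 1)` λ-length `1`. The arc `(p, q)` then has λ-length
`x p * x q * ∑ 1 / (x t * x (t + 1))`, the sum being over `p ≤ t < q`, and the generalized cluster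
variable `X(l, n)` is the arc `(l - 1, l + n)`. The multiplication formula is Ptolemy's relation for
the vertices `i - 1 < j - 1 < k + i < N + j`, where `N = m r + l`; it holds because the sums
attached to consecutive intervals add up.
-/

theorem sum_Ico_add_sum_Ico {α M : Type*} [LinearOrder α] [LocallyFiniteOrder α] [AddCommMonoid M]
    (f : α → M) {a b c : α} (hab : a ≤ b) (hbc : b ≤ c) :
    ∑ t ∈ Finset.Ico a b, f t + ∑ t ∈ Finset.Ico b c, f t = ∑ t ∈ Finset.Ico a c, f t := by
  rw [← Finset.Ico_union_Ico_eq_Ico hab hbc,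
    Finset.sum_union (Finset.Ico_disjoint_Ico_consecutive a b c)]

theorem sum_Icc_one_eq_sum_Ico_int {M : Type*} [AddCommMonoid M] (f : ℤ → M) (l : ℤ) (n : ℕ) :
    ∑ k ∈ Finset.Icc 1 n, f (l + k - 1) = ∑ t ∈ Finset.Ico l (l + n), f t := by
  refine Finset.sum_nbij' (fun k ↦ l + k - 1) (fun t ↦ (t - l + 1).toNat) ?_ ?_ ?_ ?_ ?_ <;>
    grind

section ArcLength

/-- The λ-length of the arc from `p` to `q` in the fan triangulation whose arcs to the apex have
λ-lengths `x t` and whose boundary arcs `(t, t + 1)` have λ-length `1`. It is meant for `p < q`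
(the empty sum makes it `0` if `q ≤ p`). -/
noncomputable def arcLength {K : Type*} [Semifield K] (x : ℤ → K) (p q : ℤ) : K :=
  x p * x q * ∑ t ∈ Finset.Ico p q, (x t * x (t + 1))⁻¹

variable {K : Type*} [Semifield K] (x : ℤ → K)

theorem arcLength_mul_arcLength {p q s t : ℤ} (hpq : p ≤ q) (hqs : q ≤ s) (hst : s ≤ t) :
    arcLength x p s * arcLength x q t =
      arcLength x p q * arcLength x s t + arcLength x p t * arcLength x q s := by
  simp only [arcLength]
  rw [← sum_Ico_add_sum_Ico _ hpq (hqs.trans hst), ← sum_Ico_add_sum_Ico _ hpq hqs,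
    ← sum_Ico_add_sum_Ico _ hqs hst]
  ring

variable {x}

theorem arcLength_add_one {p : ℤ} (hp : x p ≠ 0) (hp' : x (p + 1) ≠ 0) :
    arcLength x p (p + 1) = 1 := by
  rw [arcLength, Finset.Ico_add_one_right_eq_Icc, Finset.Icc_self, Finset.sum_singleton,
    mul_inv_cancel₀ (mul_ne_zero hp hp')]

theorem arcLength_eq_div_add_sum_add_div {p q : ℤ} (hpq : p < q) (hp : x p ≠ 0)
    (hq : x (q + 1) ≠ 0) :
    arcLength x p (q + 1) =
      x (q + 1) / x (p + 1) + ∑ t ∈ Finset.Ico (p + 1) q, x (q + 1) * x p / (x t * x (t + 1))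
        + x p / x q := by
  have first_term : x p * x (q + 1) * (x p * x (p + 1))⁻¹ = x (q + 1) / x (p + 1) := by
    field_simp
  have last_term : x p * x (q + 1) * (x q * x (q + 1))⁻¹ = x p / x q := by
    field_simp
  rw [arcLength, ← Finset.sum_Ico_add_eq_sum_Ico_add_one hpq.le,
    ← Finset.insert_Ico_add_one_left_eq_Ico hpq, Finset.sum_insert (by simp), mul_add, mul_add,
    first_term, last_term, Finset.mul_sum]
  simp only [div_eq_mul_inv, mul_comm (x p)]

end ArcLength

theorem xv_ne_zero (r : ℕ) (i : ℤ) : xv r i ≠ 0 := by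
  rw [xv, Ne, FaithfulSMul.algebraMap_eq_zero_iff]
  exact MvPolynomial.X_ne_zero _

theorem xv_add_natCast (r : ℕ) (i : ℤ) : xv r (i + r) = xv r i := by
  simp only [xv, Int.cast_add, Int.cast_natCast, CharP.cast_eq_zero, add_zero]

theorem Xgcv_eq_arcLength (r : ℕ) (l : ℤ) (n : ℕ) :
    Xgcv r l n = arcLength (xv r) (l - 1) (l + n) := by
  cases n with
  | zero =>
    simpa [Xgcv] using (arcLength_add_one (xv_ne_zero r (l - 1)) (xv_ne_zero r _)).symm
  | succ n =>
    have hperiod : xv r (l + r - 1) = xv r (l - 1) := by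
      rw [add_sub_right_comm, xv_add_natCast]
    have hsum := sum_Icc_one_eq_sum_Ico_int
      (fun t ↦ xv r (l + n + 1) * xv r (l - 1) / (xv r t * xv r (t + 1))) l n
    simp only [sub_add_cancel] at hsum
    rw [Xgcv, hperiod, hsum, Nat.cast_succ, ← add_assoc,
      arcLength_eq_div_add_sum_add_div (by lia) (xv_ne_zero r _) (xv_ne_zero r _), sub_add_cancel]

theorem Xgcv_toNat_eq_arcLength (r : ℕ) {l n q : ℤ} (hn : 0 ≤ n) (hq : l + n = q) :
    Xgcv r l n.toNat = arcLength (xv r) (l - 1) q := by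
  rw [Xgcv_eq_arcLength, Int.toNat_of_nonneg hn, hq]

theorem stmt5_general (r : ℕ) {i j k N : ℤ} (hij : i < j) (hk : j - i ≤ k)
    (hN : k + i + 1 ≤ N + j) :
    Xgcv r i k.toNat * Xgcv r j N.toNat =
      Xgcv r i (j - i - 1).toNat * Xgcv r (k + i + 1) (N + j - k - i - 1).toNat
        + Xgcv r i (N + j - i).toNat * Xgcv r j (k + i - j).toNat := by
  have ptolemy := arcLength_mul_arcLength (xv r) (p := i - 1) (q := j - 1) (s := k + i)
    (t := N + j) (by lia) (by lia) (by lia)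
  rw [Xgcv_toNat_eq_arcLength r (q := k + i) (by lia) (by ring),
    Xgcv_toNat_eq_arcLength r (q := N + j) (by lia) (by ring),
    Xgcv_toNat_eq_arcLength r (q := j - 1) (by lia) (by ring),
    Xgcv_toNat_eq_arcLength r (q := N + j) (by lia) (by ring),
    Xgcv_toNat_eq_arcLength r (q := N + j) (by lia) (by ring),
    Xgcv_toNat_eq_arcLength r (q := k + i) (by lia) (by ring), add_sub_cancel_right]
  exact ptolemy

/-- inductive multiplication formula, case `i < j`, `k ≥ j - i`. -/
theorem stmt5 (r : ℕ) (hr : 1 ≤ r) (i j k l m : ℤ)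
    (hi : 1 ≤ i) (hij : i < j) (hj : j ≤ r)
    (hl0 : 0 ≤ l) (hl : l ≤ (r : ℤ) - 1) (hm : 0 ≤ m)
    (hk1 : 1 ≤ k) (hk2 : k ≤ m * r + l) (hk : k ≥ j - i) :
    Xgcv r i k.toNat * Xgcv r j (m * r + l).toNat =
      Xgcv r i (j - i - 1).toNat * Xgcv r (k + i + 1) (m * r + l + j - k - i - 1).toNat
        + Xgcv r i (m * r + l + j - i).toNat * Xgcv r j (k + i - j).toNat :=
  stmt5_general r hij hk (by lia)
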